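/- Fix a positive integer n. There exists a constant c, depending only on n, such that every finite subgroup G of PGL_n(ℂ) contains a normal diagonalizable subgroup A ≤ G of index at most c. -/

import Mathlib

open Matrix

/-- The projective general linear group `PGL n K`, the quotient of `GL n K` by its
center (the nonzero scalar matrices). -/
abbrev PGL (n : ℕ) (K : Type*) [Field K] :=
  GL (Fin n) K ⧸ Subgroup.center (GL (Fin n) K)

/-- A subgroup `H` of `PGL n ℂ` is diagonalizable if its inverse image in
`GL n ℂ` is simultaneously diagonalizable: some `P ∈ GL n ℂ` conjugates every
element of the inverse image to a diagonal matrix. -/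
def IsDiagonalizableSubgroup {n : ℕ} (H : Subgroup (PGL n ℂ)) : Prop :=
  ∃ P : GL (Fin n) ℂ, ∀ g : GL (Fin n) ℂ,
    QuotientGroup.mk' (Subgroup.center (GL (Fin n) ℂ)) g ∈ H →
      Matrix.IsDiag ((P⁻¹ * g * P : GL (Fin n) ℂ) : Matrix (Fin n) (Fin n) ℂ)

/-!
A finite subgroup of `PGL n ℂ` lifts to a finite subgroup of `SL n ℂ`, since `SL n ℂ → PGL n ℂ` is
surjective with finite kernel, and averaging an inner product makes the lift unitary.

In a finite group `K` of unitary matrices the elements at distance less than `1 / 2` from `1`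
commute with each other. Otherwise, given such a `g`, choose such an `h` closest to `1` among those
not commuting with `g`. As `‖⁅g, h⁆ - 1‖ ≤ 2 ‖g - 1‖ ‖h - 1‖ < ‖h - 1‖`, the element `g` commutes
with `⁅g, h⁆`, so `⁅g, h⁆ ^ k = ⁅g ^ k, h⁆` is within `2 ‖h - 1‖ < 1` of `1` for every `k`. But no
nontrivial finite group lies within distance less than `1` of the identity: if `x = g - 1` with `g`
in a finite group `H`, then `∑ h ∈ H, x h = 0`, so `|H| x = ∑ h ∈ H, x (1 - h)` has norm less than
`|H| ‖x‖` unless `x = 0`. Hence `⁅g, h⁆ = 1`, a contradiction.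

These elements therefore generate an abelian normal subgroup of `K`. Distinct cosets of it are at
distance at least `1 / 2` in the unit ball, so their number is bounded by a volume argument, and
commuting matrices of finite order are simultaneously diagonalizable.
-/

section SimultaneousDiagonalization

variable {ι K V : Type*} [Field K] [AddCommGroup V] [Module K V]

lemma isSemisimple_of_isOfFinOrder [CharZero K] {f : Module.End K V} (hf : IsOfFinOrder f) :
    f.IsSemisimple := by
  have horder : (orderOf f : K) ≠ 0 := Nat.cast_ne_zero.mpr hf.orderOf_pos.ne'
  refine Module.End.isSemisimple_of_squarefree_aeval_eq_zero
    (Polynomial.separable_X_pow_sub_C (1 : K) horder one_ne_zero).squarefree ?_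
  simp [pow_orderOf_eq_one]

lemma exists_basis_forall_apply_eq_smul [IsAlgClosed K] [FiniteDimensional K V]
    {f : ι → Module.End K V} (hcomm : ∀ i j, Commute (f i) (f j))
    (hss : ∀ i, (f i).IsSemisimple) :
    ∃ b : Module.Basis (Fin (Module.finrank K V)) K V, ∀ i j, ∃ μ : K, f i (b j) = μ • b j := by
  classical
  have htop :=
    Module.End.iSup_iInf_maxGenEigenspace_eq_top_of_iSup_maxGenEigenspace_eq_top_of_commute f
      (fun i j _ ↦ hcomm i j) fun i ↦ (f i).iSup_maxGenEigenspace_eq_top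
  have hindep := Module.End.independent_iInf_maxGenEigenspace_of_forall_mapsTo f
    fun i j ↦ Module.End.mapsTo_maxGenEigenspace_of_comm (hcomm j i)
  have hinternal := DirectSum.isInternal_submodule_of_iSupIndep_of_iSup_eq_top hindep htop
  let b := hinternal.collectedBasis fun _ ↦ Module.finBasis K _
  have := Module.Finite.finite_basis b
  let e := b.indexEquiv (Module.finBasis K V)
  refine ⟨b.reindex e, fun i j ↦ ⟨(e.symm j).1 i, ?_⟩⟩
  have hmem := Submodule.mem_iInf _ |>.mp
    (hinternal.collectedBasis_mem (fun _ ↦ Module.finBasis K _) (e.symm j)) i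
  rw [(hss i).isFinitelySemisimple.maxGenEigenspace_eq_eigenspace,
    Module.End.mem_eigenspace_iff] at hmem
  rwa [b.reindex_apply]

lemma exists_isDiag_conj_of_commute [IsAlgClosed K] [CharZero K] {n : Type*} [Fintype n]
    [DecidableEq n] {M : ι → Matrix n n K} (hcomm : ∀ i j, Commute (M i) (M j))
    (hfin : ∀ i, IsOfFinOrder (M i)) :
    ∃ P : GL n K, ∀ i, ((P⁻¹ : GL n K) * M i * P : Matrix n n K).IsDiag := by
  obtain ⟨b₀, hb₀⟩ := exists_basis_forall_apply_eq_smul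
    (fun i j ↦ (hcomm i j).map toLinAlgEquiv')
    (fun i ↦ isSemisimple_of_isOfFinOrder <|
      (toLinAlgEquiv' : Matrix n n K ≃ₐ[K] _).toMonoidHom.isOfFinOrder (hfin i))
  let b := b₀.reindex (b₀.indexEquiv (Pi.basisFun K n))
  let std := Pi.basisFun K n
  refine ⟨⟨std.toMatrix b, b.toMatrix std, std.toMatrix_mul_toMatrix_flip b,
    b.toMatrix_mul_toMatrix_flip std⟩, fun i k l hkl ↦ ?_⟩
  have hconj : b.toMatrix std * M i * std.toMatrix b = LinearMap.toMatrix b b (toLin' (M i)) := by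
    rw [← basis_toMatrix_mul_linearMap_toMatrix_mul_basis_toMatrix b std b std,
      ← toLin_eq_toLin', LinearMap.toMatrix_toLin]
  obtain ⟨μ, hμ⟩ : ∃ μ : K, toLin' (M i) (b l) = μ • b l := by
    simpa [b] using hb₀ i _
  change (b.toMatrix std * M i * std.toMatrix b) k l = 0
  rw [hconj, LinearMap.toMatrix_apply, hμ]
  simp [hkl.symm]

end SimultaneousDiagonalization

section Commutator

open scoped commutatorElement

variable {G : Type*} [Group G] {g h : G}

lemma commutatorElement_zpow_left_of_commute (hcomm : Commute g ⁅g, h⁆) (k : ℤ) :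
    ⁅g ^ k, h⁆ = ⁅g, h⁆ ^ k := by
  have hdef (x : G) : ⁅x, h⁆ = x * (h * x⁻¹ * h⁻¹) := by group
  have hconj : Commute g (h * g⁻¹ * h⁻¹) := by
    simpa [hdef] using (Commute.refl g).inv_right.mul_right hcomm
  rw [hdef, hdef, hconj.mul_zpow, conj_zpow, inv_zpow g]

end Commutator

section ContractiveRepresentation

open scoped commutatorElement

variable {G A : Type*} [Group G] [NormedRing A]

lemma norm_map_mul_of_forall_norm_le_one {ρ : G →* A} (hρ : ∀ g, ‖ρ g‖ ≤ 1) (g : G) (x : A) :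
    ‖ρ g * x‖ = ‖x‖ := by
  have hle (g : G) (x : A) : ‖ρ g * x‖ ≤ ‖x‖ :=
    (norm_mul_le _ _).trans (mul_le_of_le_one_left (norm_nonneg x) (hρ g))
  refine (hle g x).antisymm ?_
  simpa [← mul_assoc, ← map_mul] using hle g⁻¹ (ρ g * x)

lemma norm_mul_map_of_forall_norm_le_one {ρ : G →* A} (hρ : ∀ g, ‖ρ g‖ ≤ 1) (g : G) (x : A) :
    ‖x * ρ g‖ = ‖x‖ := by
  have hle (g : G) (x : A) : ‖x * ρ g‖ ≤ ‖x‖ :=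
    (norm_mul_le _ _).trans (mul_le_of_le_one_right (norm_nonneg x) (hρ g))
  refine (hle g x).antisymm ?_
  simpa [mul_assoc, ← map_mul] using hle g⁻¹ (x * ρ g)

lemma norm_map_conj_sub_one {ρ : G →* A} (hρ : ∀ g, ‖ρ g‖ ≤ 1) (g h : G) :
    ‖ρ (g * h * g⁻¹) - 1‖ = ‖ρ h - 1‖ := by
  have hconj : ρ (g * h * g⁻¹) - 1 = ρ g * (ρ h - 1) * ρ g⁻¹ := by
    simp [mul_sub, sub_mul, ← map_mul]
  rw [hconj, norm_mul_map_of_forall_norm_le_one hρ, norm_map_mul_of_forall_norm_le_one hρ]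

lemma norm_map_inv_mul_sub_one {ρ : G →* A} (hρ : ∀ g, ‖ρ g‖ ≤ 1) (g h : G) :
    ‖ρ (g⁻¹ * h) - 1‖ = ‖ρ g - ρ h‖ := by
  have hsub : ρ (g⁻¹ * h) - 1 = ρ g⁻¹ * (ρ h - ρ g) := by
    simp [mul_sub, ← map_mul]
  rw [hsub, norm_map_mul_of_forall_norm_le_one hρ, norm_sub_rev]

lemma norm_map_commutatorElement_sub_one {ρ : G →* A} (hρ : ∀ g, ‖ρ g‖ ≤ 1) (g h : G) :
    ‖ρ ⁅g, h⁆ - 1‖ = ‖ρ g * ρ h - ρ h * ρ g‖ := by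
  have hcomm : ρ ⁅g, h⁆ - 1 = (ρ g * ρ h - ρ h * ρ g) * ρ (h * g)⁻¹ := by
    simp [commutatorElement_def, sub_mul, ← map_mul, mul_assoc]
  rw [hcomm, norm_mul_map_of_forall_norm_le_one hρ]

lemma norm_map_commutatorElement_sub_one_le {ρ : G →* A} (hρ : ∀ g, ‖ρ g‖ ≤ 1) (g h : G) :
    ‖ρ ⁅g, h⁆ - 1‖ ≤ 2 * ‖ρ h - 1‖ := by
  calc ‖ρ ⁅g, h⁆ - 1‖ = ‖ρ g * (ρ h - 1) - (ρ h - 1) * ρ g‖ := by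
        rw [norm_map_commutatorElement_sub_one hρ]; congr 1; noncomm_ring
    _ ≤ ‖ρ g * (ρ h - 1)‖ + ‖(ρ h - 1) * ρ g‖ := norm_sub_le _ _
    _ = 2 * ‖ρ h - 1‖ := by
        rw [norm_map_mul_of_forall_norm_le_one hρ, norm_mul_map_of_forall_norm_le_one hρ, two_mul]

lemma norm_map_commutatorElement_sub_one_le_mul {ρ : G →* A} (hρ : ∀ g, ‖ρ g‖ ≤ 1) (g h : G) :
    ‖ρ ⁅g, h⁆ - 1‖ ≤ 2 * ‖ρ g - 1‖ * ‖ρ h - 1‖ := by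
  calc ‖ρ ⁅g, h⁆ - 1‖ = ‖(ρ g - 1) * (ρ h - 1) - (ρ h - 1) * (ρ g - 1)‖ := by
        rw [norm_map_commutatorElement_sub_one hρ]; congr 1; noncomm_ring
    _ ≤ ‖(ρ g - 1) * (ρ h - 1)‖ + ‖(ρ h - 1) * (ρ g - 1)‖ := norm_sub_le _ _
    _ ≤ ‖ρ g - 1‖ * ‖ρ h - 1‖ + ‖ρ h - 1‖ * ‖ρ g - 1‖ :=
        add_le_add (norm_mul_le _ _) (norm_mul_le _ _)
    _ = 2 * ‖ρ g - 1‖ * ‖ρ h - 1‖ := by ring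

variable [NormedAlgebra ℝ A] [Finite G]

lemma map_eq_one_of_forall_norm_sub_one_lt_one {ρ : G →* A} (hρ : ∀ g, ‖ρ g - 1‖ < 1) (g : G) :
    ρ g = 1 := by
  have := Fintype.ofFinite G
  by_contra hne
  set x := ρ g - 1 with hx
  have hxpos : 0 < ‖x‖ := norm_pos_iff.mpr (sub_ne_zero.mpr hne)
  have hinvariant : ∑ h, x * ρ h = 0 := by
    simp only [hx, sub_mul, one_mul, ← map_mul, Finset.sum_sub_distrib, sub_eq_zero]
    exact Equiv.sum_comp (Equiv.mulLeft g) ρ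
  have hsum : Fintype.card G • x = ∑ h, x * (1 - ρ h) := by
    simp [mul_sub, Finset.sum_sub_distrib, hinvariant]
  have hlt : Fintype.card G * ‖x‖ < Fintype.card G * ‖x‖ :=
    calc (Fintype.card G : ℝ) * ‖x‖ = ‖∑ h, x * (1 - ρ h)‖ := by
          rw [← hsum, ← Nat.cast_smul_eq_nsmul ℝ, norm_smul, Real.norm_natCast]
      _ ≤ ∑ h, ‖x * (1 - ρ h)‖ := norm_sum_le _ _
      _ < ∑ _h : G, ‖x‖ := Finset.sum_lt_sum_of_nonempty Finset.univ_nonempty fun h _ ↦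
          (norm_mul_le _ _).trans_lt <| mul_lt_of_lt_one_right hxpos <| by
            rw [norm_sub_rev]; exact hρ h
      _ = Fintype.card G * ‖x‖ := by simp
  exact hlt.false

lemma commute_of_commute_commutatorElement {ρ : G →* A} (hinj : Function.Injective ρ)
    (hρ : ∀ g, ‖ρ g‖ ≤ 1) {g h : G} (hh : ‖ρ h - 1‖ < 1 / 2) (hcomm : Commute g ⁅g, h⁆) :
    Commute g h := by
  let σ : Subgroup.zpowers ⁅g, h⁆ →* A := ρ.comp (Subgroup.subtype _)
  have hpowers (c : Subgroup.zpowers ⁅g, h⁆) : ‖σ c - 1‖ < 1 := by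
    obtain ⟨_, k, rfl⟩ := c
    calc ‖ρ (⁅g, h⁆ ^ k) - 1‖ = ‖ρ ⁅g ^ k, h⁆ - 1‖ := by
          rw [commutatorElement_zpow_left_of_commute hcomm]
      _ ≤ 2 * ‖ρ h - 1‖ := norm_map_commutatorElement_sub_one_le hρ _ _
      _ < 1 := by linarith
  have hone : ρ ⁅g, h⁆ = 1 :=
    map_eq_one_of_forall_norm_sub_one_lt_one hpowers ⟨_, Subgroup.mem_zpowers ⁅g, h⁆⟩
  exact commutatorElement_eq_one_iff_commute.mp (hinj (hone.trans (map_one ρ).symm))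

lemma commute_of_norm_map_sub_one_lt {ρ : G →* A} (hinj : Function.Injective ρ)
    (hρ : ∀ g, ‖ρ g‖ ≤ 1) {g h : G} (hg : ‖ρ g - 1‖ < 1 / 2) (hh : ‖ρ h - 1‖ < 1 / 2) :
    Commute g h := by
  by_contra hne
  obtain ⟨m, ⟨hm, hgm⟩, hmin⟩ :=
    (Set.toFinite {x : G | ‖ρ x - 1‖ < 1 / 2 ∧ ¬ Commute g x}).exists_minimalFor
      (fun x ↦ ‖ρ x - 1‖) _ ⟨h, hh, hne⟩
  have hmpos : 0 < ‖ρ m - 1‖ := by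
    refine norm_pos_iff.mpr (sub_ne_zero.mpr fun hone ↦ hgm ?_)
    rw [hinj (hone.trans (map_one ρ).symm)]
    exact Commute.one_right g
  have hlt : ‖ρ ⁅g, m⁆ - 1‖ < ‖ρ m - 1‖ :=
    calc ‖ρ ⁅g, m⁆ - 1‖ ≤ 2 * ‖ρ g - 1‖ * ‖ρ m - 1‖ :=
          norm_map_commutatorElement_sub_one_le_mul hρ g m
      _ < ‖ρ m - 1‖ := mul_lt_of_lt_one_left hmpos (by linarith)
  have hcomm : Commute g ⁅g, m⁆ := by
    by_contra hcontra
    exact (hmin ⟨hlt.trans hm, hcontra⟩ hlt.le).not_gt hlt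
  exact hgm (commute_of_commute_commutatorElement hinj hρ hm hcomm)

end ContractiveRepresentation

/-- The subgroup generated by the elements that a representation `ρ` sends close to the identity.
For a faithful norm-nonincreasing `ρ` of a finite group it is the abelian normal subgroup of
Jordan's theorem. The radius `1 / 2` is the one for which commutators of two such elements are
strictly closer to the identity. -/
def nearOneSubgroup {G A : Type*} [Group G] [NormedRing A] (ρ : G →* A) : Subgroup G :=
  Subgroup.closure {g | ‖ρ g - 1‖ < 1 / 2}

namespace nearOneSubgroup

variable {G A : Type*} [Group G] [NormedRing A] {ρ : G →* A}

lemma normal (hρ : ∀ g, ‖ρ g‖ ≤ 1) : (nearOneSubgroup ρ).Normal := by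
  have hnormalizer : Subgroup.normalizer {g | ‖ρ g - 1‖ < 1 / 2} = ⊤ := by
    refine (Subgroup.eq_top_iff' _).mpr fun g h ↦ ?_
    simp only [Set.mem_ofPred_eq, norm_map_conj_sub_one hρ]
  rw [← Subgroup.normalizer_eq_top_iff, eq_top_iff, ← hnormalizer]
  exact Subgroup.normalizer_le_normalizer_closure _

variable [NormedAlgebra ℝ A] [Finite G]

lemma isMulCommutative (hinj : Function.Injective ρ) (hρ : ∀ g, ‖ρ g‖ ≤ 1) :
    IsMulCommutative (nearOneSubgroup ρ) :=
  Subgroup.isMulCommutative_closure fun _ hg _ hh ↦ commute_of_norm_map_sub_one_lt hinj hρ hg hh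

lemma index_le [FiniteDimensional ℝ A] (hρ : ∀ g, ‖ρ g‖ ≤ 1) :
    (nearOneSubgroup ρ).index ≤ 5 ^ Module.finrank ℝ A := by
  classical
  have := Fintype.ofFinite (G ⧸ nearOneSubgroup ρ)
  -- After rescaling by `2` the images of coset representatives form a `1`-separated set in the ball
  -- of radius `2`, where a volume comparison bounds its cardinality.
  let p (q : G ⧸ nearOneSubgroup ρ) : A := (2 : ℝ) • ρ q.out
  have hseparated {q r : G ⧸ nearOneSubgroup ρ} (hqr : q ≠ r) : 1 ≤ ‖p q - p r‖ := by
    have hnotMem : q.out⁻¹ * r.out ∉ nearOneSubgroup ρ := fun hmem ↦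
      hqr (by rwa [← QuotientGroup.eq, QuotientGroup.out_eq', QuotientGroup.out_eq'] at hmem)
    have hfar : 1 / 2 ≤ ‖ρ q.out - ρ r.out‖ := by
      rw [← norm_map_inv_mul_sub_one hρ]
      exact not_lt.mp fun hlt ↦ hnotMem (Subgroup.subset_closure hlt)
    rw [← smul_sub, norm_smul, Real.norm_two]
    linarith
  have hp : Function.Injective p := fun q r hqr ↦ by
    by_contra hne
    have hle := hseparated hne
    rw [hqr, sub_self, norm_zero] at hle
    exact zero_lt_one.not_ge hle
  rw [Subgroup.index, Nat.card_eq_fintype_card, ← Finset.card_univ,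
    ← Finset.card_image_of_injective _ hp]
  refine Besicovitch.card_le_of_separated _ ?_ ?_
  · simpa [p, norm_smul] using fun q : G ⧸ nearOneSubgroup ρ ↦ hρ q.out
  · simpa using fun q r hne ↦ hseparated (ne_of_apply_ne p hne)

end nearOneSubgroup

section JordanTheorem

variable {G : Type*} [Group G] [Finite G]

lemma exists_forall_conj_mem_unitary {A : Type*} [CStarAlgebra A] [PartialOrder A]
    [StarOrderedRing A] (ρ : G →* Aˣ) :
    ∃ b : Aˣ, ∀ g, ((b * ρ g * b⁻¹ : Aˣ) : A) ∈ unitary A := by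
  have := Fintype.ofFinite G
  -- `s` plays the role of a `G`-invariant inner product, `b` that of an orthonormal frame for it.
  let s : A := ∑ h, star (ρ h : A) * ρ h
  have hs : IsStrictlyPositive s :=
    Finset.sum_induction_nonempty _ IsStrictlyPositive
      (fun _ _ hx hy ↦ isStrictlyPositive_add (.inl ⟨hx, hy.nonneg⟩)) Finset.univ_nonempty
      fun h _ ↦ CStarAlgebra.isStrictlyPositive_iff_eq_star_mul_self.mpr ⟨_, (ρ h).isUnit, rfl⟩
  have hinvariant (g : G) : star (ρ g : A) * s * ρ g = s := by
    simp only [s, Finset.mul_sum, Finset.sum_mul]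
    exact Fintype.sum_equiv (Equiv.mulRight g) _ _ fun h ↦ by simp [mul_assoc]
  obtain ⟨_, ⟨b, rfl⟩, hsb⟩ := CStarAlgebra.isStrictlyPositive_iff_eq_star_mul_self.mp hs
  refine ⟨b, fun g ↦ ?_⟩
  have hstar : star ((b * ρ g * b⁻¹ : Aˣ) : A) * (b * ρ g * b⁻¹ : Aˣ) = 1 :=
    calc star ((b * ρ g * b⁻¹ : Aˣ) : A) * (b * ρ g * b⁻¹ : Aˣ)
        = star (↑b⁻¹ : A) * (star (ρ g : A) * (star (b : A) * b) * ρ g) * ↑b⁻¹ := by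
          simp [mul_assoc]
      _ = star ((b : A) * ↑b⁻¹) * (b * ↑b⁻¹) := by
          rw [← hsb, hinvariant, hsb]; simp only [star_mul, mul_assoc]
      _ = 1 := by simp
  exact (Units.isUnit _).mem_unitary_of_star_mul_self hstar

lemma norm_le_one_of_mem_unitary {A : Type*} [NormedRing A] [StarRing A] [CStarRing A] {u : A}
    (hu : u ∈ unitary A) : ‖u‖ ≤ 1 := by
  nontriviality A
  exact (CStarRing.norm_of_mem_unitary hu).le

theorem exists_normal_isMulCommutative_index_le {A : Type*} [CStarAlgebra A] [PartialOrder A]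
    [StarOrderedRing A] [FiniteDimensional ℂ A] {ρ : G →* Aˣ} (hρ : Function.Injective ρ) :
    ∃ N : Subgroup G, N.Normal ∧ IsMulCommutative N ∧ N.index ≤ 5 ^ (2 * Module.finrank ℂ A) := by
  obtain ⟨b, hb⟩ := exists_forall_conj_mem_unitary ρ
  let σ : G →* A := (Units.coeHom A).comp ((MulAut.conj b).toMonoidHom.comp ρ)
  have hinj : Function.Injective σ :=
    Units.val_injective.comp ((MulAut.conj b).injective.comp hρ)
  have hσ (g : G) : ‖σ g‖ ≤ 1 := norm_le_one_of_mem_unitary (hb g)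
  rw [← finrank_real_of_complex]
  exact ⟨nearOneSubgroup σ, nearOneSubgroup.normal hσ, nearOneSubgroup.isMulCommutative hinj hσ,
    nearOneSubgroup.index_le hσ⟩

open scoped Matrix.Norms.L2Operator MatrixOrder in
theorem exists_normal_isMulCommutative_index_le_of_GL {n : Type*} [Fintype n] [DecidableEq n]
    {ρ : G →* GL n ℂ} (hρ : Function.Injective ρ) :
    ∃ N : Subgroup G, N.Normal ∧ IsMulCommutative N ∧ N.index ≤ 5 ^ (2 * Fintype.card n ^ 2) := by
  simpa [Module.finrank_matrix, sq] using exists_normal_isMulCommutative_index_le hρ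

end JordanTheorem

lemma finite_comap_of_finite_ker {G G' : Type*} [Group G] [Group G'] (f : G →* G') [Finite f.ker]
    (H : Subgroup G') [Finite H] : Finite (H.comap f) := by
  refine Set.Finite.of_finite_fibers f (s := f ⁻¹' H)
    ((Set.toFinite (H : Set G')).subset (Set.image_preimage_subset f H)) ?_
  rintro _ ⟨g, -, rfl⟩
  have : Finite (f ⁻¹' {f g}) := Finite.of_equiv _ (f.fiberEquivKer g).symm
  exact (Set.toFinite (f ⁻¹' {f g})).subset Set.inter_subset_right

section ProjectiveGeneralLinearGroup

variable {n : ℕ}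

/-- The natural map `SL n K → PGL n K`. -/
def slToPGL (n : ℕ) (K : Type*) [Field K] : SpecialLinearGroup (Fin n) K →* PGL n K :=
  (QuotientGroup.mk' _).comp SpecialLinearGroup.toGL

lemma finite_ker_slToPGL (K : Type*) [Field K] : Finite (slToPGL n K).ker := by
  have hker : (slToPGL n K).ker = Subgroup.center _ := SpecialLinearGroup.toPGL_ker
  have : NeZero (max (Fintype.card (Fin n)) 1) := ⟨by simp⟩
  rw [hker]
  exact Finite.of_equiv _ SpecialLinearGroup.center_equiv_rootsOfUnity.symm.toEquiv

lemma slToPGL_surjective (K : Type*) [Field K] [IsAlgClosed K] (hn : 0 < n) :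
    Function.Surjective (slToPGL n K) := by
  have hroots (u : Kˣ) : ∃ v : Kˣ, v ^ Fintype.card (Fin n) = u := by
    obtain ⟨z, hz⟩ := IsAlgClosed.exists_pow_nat_eq (u : K) hn
    have hz0 : z ≠ 0 := by
      rintro rfl
      exact u.ne_zero (by rw [← hz, zero_pow hn.ne'])
    exact ⟨Units.mk0 z hz0, Units.ext (by simpa using hz)⟩
  exact (ProjectiveSpecialLinearGroup.toPGL_surj_of_roots hroots).comp
    (QuotientGroup.mk'_surjective _)

lemma isDiagonalizableSubgroup_map_mk' (A : Subgroup (GL (Fin n) ℂ)) [Finite A]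
    [IsMulCommutative A] : IsDiagonalizableSubgroup (A.map (QuotientGroup.mk' _)) := by
  let ρ : A →* Matrix (Fin n) (Fin n) ℂ := (Units.coeHom _).comp A.subtype
  obtain ⟨P, hP⟩ := exists_isDiag_conj_of_commute
    (fun a b : A ↦ Commute.map (mul_comm' a b) ρ) fun a ↦ ρ.isOfFinOrder (isOfFinOrder_of_finite a)
  refine ⟨P, fun g ⟨a, ha, hag⟩ ↦ ?_⟩
  obtain ⟨z, hz, rfl⟩ := (QuotientGroup.mk'_eq_mk' _).mp hag
  obtain ⟨c, rfl⟩ : z ∈ (GeneralLinearGroup.scalar (Fin n)).range := by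
    rwa [← GeneralLinearGroup.center_eq_range_scalar]
  have hsmul : ((P⁻¹ * (a * GeneralLinearGroup.scalar (Fin n) c) * P : GL (Fin n) ℂ) :
      Matrix (Fin n) (Fin n) ℂ) =
      (c : ℂ) • ((P⁻¹ : GL (Fin n) ℂ) * a * P : Matrix (Fin n) (Fin n) ℂ) := by
    simp [← smul_one_eq_diagonal]
  rw [hsmul]
  exact (hP ⟨a, ha⟩).smul _

end ProjectiveGeneralLinearGroup

/-- for every `n > 0` there is a constant `c` such that every
finite subgroup `G` of `PGL n ℂ` has a normal, diagonalizable subgroup of index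
at most `c`. -/
theorem exists_normal_diagonalizable_subgroup (n : ℕ) (hn : 0 < n) :
    ∃ c : ℕ, ∀ (G : Subgroup (PGL n ℂ)), Finite G →
      ∃ A : Subgroup G, A.Normal ∧ A.index ≤ c ∧
        IsDiagonalizableSubgroup (A.map G.subtype) := by
  refine ⟨5 ^ (2 * n ^ 2), fun G _ ↦ ?_⟩
  let K := G.comap (slToPGL n ℂ)
  have := finite_ker_slToPGL (n := n) ℂ
  have : Finite K := finite_comap_of_finite_ker (slToPGL n ℂ) G
  let ι : K →* GL (Fin n) ℂ := SpecialLinearGroup.toGL.comp K.subtype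
  have hι : Function.Injective ι := SpecialLinearGroup.toGL_injective.comp K.subtype_injective
  obtain ⟨N, hN, _, hindex⟩ := exists_normal_isMulCommutative_index_le_of_GL hι
  have : Finite (N.map ι) := Finite.of_surjective _ (ι.subgroupMap_surjective N)
  let π : K →* G := (slToPGL n ℂ).subgroupComap G
  have hπ : Function.Surjective π :=
    (slToPGL n ℂ).subgroupComap_surjective_of_surjective G (slToPGL_surjective ℂ hn)
  have hmap : (N.map π).map G.subtype = (N.map ι).map (QuotientGroup.mk' _) := by
    rw [Subgroup.map_map, Subgroup.map_map]
    rfl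
  refine ⟨N.map π, hN.map π hπ, ?_, hmap ▸ isDiagonalizableSubgroup_map_mk' (N.map ι)⟩
  calc (N.map π).index ≤ N.index :=
        Nat.le_of_dvd (Nat.pos_of_ne_zero Subgroup.index_ne_zero_of_finite) (N.index_map_dvd hπ)
    _ ≤ 5 ^ (2 * n ^ 2) := by simpa using hindex
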